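/- Suppose each device objective f_d is convex, lower semicontinuous, and proper, and let ρ > 0. Suppose (p, u) is a fixed point of prox-average message passing, i.e., u : 𝒯 → ℝ^T is constant on each net, p̄ = 0, and for every device d, p_d = prox_{f_d,ρ}(p_d − u_d). Then p is optimal for the OPSP and y = ρu is a set of optimal Lagrange multipliers: p minimizes q ↦ f(q) + ∑_{t∈𝒯} ⟨y_t, q̄_t⟩ over all sets of power schedules q, and p minimizes f over {q : q̄ = 0}. -/

import Mathlib

/-!
Minimality of `p_d` in the proximal problem, tested along the segment from `p_d` to an arbitrary
`y` and combined with convexity of `f_d`, gives `f_d(p_d) ≤ f_d(y) + ρ ∑ ⟨u_t, y_t - p_t⟩`, that is,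
`-ρ u_d` is a subgradient of `f_d` at `p_d` (`device_le`). Summing over devices shows that `p`
minimizes `q ↦ f(q) + ∑_t ⟨ρ u_t, q_t⟩`. Averaging over nets is self-adjoint and fixes `u`, so
`∑_t ⟨ρ u_t, q_t⟩ = ∑_t ⟨ρ u_t, q̄_t⟩` (`sum_inner_netAvg`), which turns this functional into the
Lagrangian. On `{q : q̄ = 0}` the Lagrangian is `f`, so `p` is optimal there.
-/

open Finset RealInnerProductSpace

/-- Average net power imbalance: `p̄ t = (1/|n|) ∑_{t'∈n} p t'`, where `n` is the net of `t`
(nets are the fibers of `net : 𝒯 → N`). -/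
noncomputable def netAvg {𝒯 N : Type*} [Fintype 𝒯] [DecidableEq N] {T : ℕ}
    (net : 𝒯 → N) (p : 𝒯 → EuclideanSpace ℝ (Fin T)) (t : 𝒯) : EuclideanSpace ℝ (Fin T) :=
  (((univ.filter fun t' => net t' = net t).card : ℝ)⁻¹) •
    ∑ t' ∈ univ.filter fun t' => net t' = net t, p t'

/-- The network objective `f(p) = ∑_{d ∈ 𝒟} f_d(p_d)`, where `p_d` is the restriction of
`p` to the terminals of device `d` (devices are the fibers of `dev : 𝒯 → D`). -/
noncomputable def netObj {𝒯 D : Type*} [Fintype 𝒯] [Fintype D] [DecidableEq D] {T : ℕ}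
    (dev : 𝒯 → D)
    (f : ∀ d : D, ({t : 𝒯 // dev t = d} → EuclideanSpace ℝ (Fin T)) → EReal)
    (p : 𝒯 → EuclideanSpace ℝ (Fin T)) : EReal :=
  ∑ d : D, f d fun t => p t.1

/-- For `u` constant on each net, pairing with `u` does not distinguish `q` from its net average. -/
lemma sum_inner_netAvg {𝒯 N : Type*} [Fintype 𝒯] [DecidableEq N] {T : ℕ} (net : 𝒯 → N)
    (u q : 𝒯 → EuclideanSpace ℝ (Fin T)) (hu : ∀ t t', net t = net t' → u t = u t') :
    ∑ t, ⟪u t, netAvg net q t⟫ = ∑ t, ⟪u t, q t⟫ := by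
  have h1 : ∀ t, ⟪u t, netAvg net q t⟫ = ∑ t', if net t' = net t then
      ((univ.filter fun s => net s = net t').card : ℝ)⁻¹ * ⟪u t', q t'⟫ else 0 := by
    intro t
    rw [netAvg, real_inner_smul_right, inner_sum, Finset.mul_sum, Finset.sum_filter]
    refine Finset.sum_congr rfl fun t' _ => ?_
    split_ifs with h
    · rw [hu t' t h, h]
    · rfl
  simp_rw [h1]
  rw [Finset.sum_comm]
  refine Finset.sum_congr rfl fun t' _ => ?_
  have hpos : ((univ.filter fun s => net s = net t').card : ℝ) ≠ 0 := by
    have : 0 < (univ.filter fun s => net s = net t').card :=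
      Finset.card_pos.mpr ⟨t', by simp⟩
    positivity
  rw [← Finset.sum_filter, Finset.sum_const, nsmul_eq_mul]
  simp_rw [eq_comm (a := net t')]
  field_simp

/-- A minimizer `x` of the proximal problem centred at `x - u` minimizes the linearization
`y ↦ g y + ρ ∑ ⟨u i, y i⟩`. -/
lemma device_le {ι : Type*} [Fintype ι] {T : ℕ} (g : (ι → EuclideanSpace ℝ (Fin T)) → EReal)
    (hbot : ∀ x, g x ≠ ⊥)
    (hconv : ∀ x y : ι → EuclideanSpace ℝ (Fin T), ∀ a b : ℝ, 0 ≤ a → 0 ≤ b → a + b = 1 →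
      g (a • x + b • y) ≤ (a : EReal) * g x + (b : EReal) * g y)
    (hproper : ∃ x, g x ≠ ⊤) (ρ : ℝ) (x u : ι → EuclideanSpace ℝ (Fin T))
    (hfix : ∀ y : ι → EuclideanSpace ℝ (Fin T),
      g x + (((ρ / 2) * ∑ i, ‖(x i - u i) - x i‖ ^ 2 : ℝ) : EReal) ≤
        g y + (((ρ / 2) * ∑ i, ‖(x i - u i) - y i‖ ^ 2 : ℝ) : EReal))
    (y : ι → EuclideanSpace ℝ (Fin T)) :
    g x + ((∑ i, ⟪ρ • u i, x i⟫ : ℝ) : EReal) ≤ g y + ((∑ i, ⟪ρ • u i, y i⟫ : ℝ) : EReal) := by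
  by_cases hy : g y = ⊤
  · rw [hy, EReal.top_add_coe]
    exact le_top
  have hx : g x ≠ ⊤ := by
    obtain ⟨z, hz⟩ := hproper
    intro h
    have h2 := hfix z
    lift g z to ℝ using ⟨hz, hbot z⟩ with w
    rw [h, EReal.top_add_coe, ← EReal.coe_add, top_le_iff] at h2
    exact EReal.coe_ne_top _ h2
  -- The difference quotient of the proximal objective along the segment from `x` to `y`.
  have key : ∀ a : ℝ, 0 < a → a < 1 → (g x).toReal + ∑ i, ⟪ρ • u i, x i⟫ ≤
      (g y).toReal + ∑ i, ⟪ρ • u i, y i⟫ + a * (ρ / 2 * ∑ i, ‖y i - x i‖ ^ 2) := by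
    intro a ha ha1
    have h1 := (hfix ((1 - a) • x + a • y)).trans
      (add_le_add_left (hconv x y (1 - a) a (by linarith) ha.le (by ring)) _)
    rw [← EReal.coe_toReal hx (hbot x), ← EReal.coe_toReal hy (hbot y)] at h1
    norm_cast at h1
    have h2 : ∀ i, ‖(x i - u i) - ((1 - a) • x + a • y) i‖ ^ 2 =
        ‖(x i - u i) - x i‖ ^ 2 + 2 * a * (⟪u i, y i⟫ - ⟪u i, x i⟫)
          + a ^ 2 * ‖y i - x i‖ ^ 2 := by
      intro i
      have e1 : (x i - u i) - ((1 - a) • x + a • y) i = -(u i + a • (y i - x i)) := by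
        simp only [Pi.add_apply, Pi.smul_apply]
        module
      have e2 : (x i - u i) - x i = -u i := by abel
      rw [e1, e2, norm_neg, norm_neg, norm_add_sq_real, norm_smul, real_inner_smul_right,
        inner_sub_right, mul_pow, Real.norm_eq_abs, sq_abs]
      ring
    simp_rw [h2] at h1
    rw [Finset.sum_add_distrib, Finset.sum_add_distrib, ← Finset.mul_sum, ← Finset.mul_sum,
      Finset.sum_sub_distrib] at h1
    simp_rw [real_inner_smul_left]
    rw [← Finset.mul_sum, ← Finset.mul_sum]
    refine le_of_mul_le_mul_left ?_ ha
    linarith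
  have hlim : Filter.Tendsto (fun a : ℝ => (g y).toReal + ∑ i, ⟪ρ • u i, y i⟫
      + a * (ρ / 2 * ∑ i, ‖y i - x i‖ ^ 2)) (nhdsWithin 0 (Set.Ioi 0))
      (nhds ((g y).toReal + ∑ i, ⟪ρ • u i, y i⟫)) := by
    refine Filter.Tendsto.mono_left ?_ nhdsWithin_le_nhds
    refine Continuous.tendsto' (by fun_prop) _ _ (by simp)
  have h := ge_of_tendsto hlim (by
    filter_upwards [Ioo_mem_nhdsGT (zero_lt_one' ℝ)] with a ha using key a ha.1 ha.2)
  rw [← EReal.coe_toReal hx (hbot x), ← EReal.coe_toReal hy (hbot y)]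
  exact_mod_cast h

/-- If `(p, u)` is a fixed point of prox-average message passing (with `u` constant on
each net, `p̄ = 0`, and `p_d = prox_{f_d,ρ}(p_d − u_d)` for every device `d`), then `p` is
optimal for the OPSP and `y = ρ u` is a set of optimal Lagrange multipliers: `p` minimizes
the Lagrangian `q ↦ f(q) + ∑_t ⟨y_t, q̄_t⟩` over all power schedules, and `p` minimizes
`f` over `{q : q̄ = 0}`. -/
theorem stmt9 {𝒯 D N : Type*} [Fintype 𝒯] [Fintype D] [DecidableEq D] [DecidableEq N]
    (dev : 𝒯 → D) (net : 𝒯 → N) (hsurj : Function.Surjective net) (T : ℕ)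
    (f : ∀ d : D, ({t : 𝒯 // dev t = d} → EuclideanSpace ℝ (Fin T)) → EReal)
    (hbot : ∀ d x, f d x ≠ ⊥)
    (hconv : ∀ d, ∀ x y : {t : 𝒯 // dev t = d} → EuclideanSpace ℝ (Fin T), ∀ a b : ℝ,
      0 ≤ a → 0 ≤ b → a + b = 1 →
      f d (a • x + b • y) ≤ (a : EReal) * f d x + (b : EReal) * f d y)
    (hlsc : ∀ d, LowerSemicontinuous (f d))
    (hproper : ∀ d, ∃ x, f d x ≠ ⊤)
    (ρ : ℝ) (hρ : 0 < ρ)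
    (p u : 𝒯 → EuclideanSpace ℝ (Fin T))
    -- `u` is constant on each net
    (huconst : ∀ t t', net t = net t' → u t = u t')
    -- `p̄ = 0`
    (hbal : ∀ t, netAvg net p t = 0)
    -- for every device `d`, `p_d = prox_{f_d,ρ}(p_d − u_d)`
    (hfix : ∀ d, ∀ y : {t : 𝒯 // dev t = d} → EuclideanSpace ℝ (Fin T),
      f d (fun t => p t.1) +
        (((ρ / 2) * ∑ t : {t : 𝒯 // dev t = d},
          ‖(p t.1 - u t.1) - p t.1‖ ^ 2 : ℝ) : EReal) ≤
      f d y +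
        (((ρ / 2) * ∑ t : {t : 𝒯 // dev t = d},
          ‖(p t.1 - u t.1) - y t‖ ^ 2 : ℝ) : EReal)) :
    -- `p` minimizes the Lagrangian with multipliers `y = ρ u`
    (∀ q : 𝒯 → EuclideanSpace ℝ (Fin T),
      netObj dev f p + ((∑ t, ⟪ρ • u t, netAvg net p t⟫ : ℝ) : EReal) ≤
        netObj dev f q + ((∑ t, ⟪ρ • u t, netAvg net q t⟫ : ℝ) : EReal)) ∧
    -- `p` is optimal for the OPSP
    (∀ q : 𝒯 → EuclideanSpace ℝ (Fin T),
      (∀ t, netAvg net q t = 0) → netObj dev f p ≤ netObj dev f q) := by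
  have hlag : ∀ q : 𝒯 → EuclideanSpace ℝ (Fin T),
      netObj dev f q + ((∑ t, ⟪ρ • u t, netAvg net q t⟫ : ℝ) : EReal) =
        ∑ d, (f d (fun t => q t.1) +
          ((∑ t : {t : 𝒯 // dev t = d}, ⟪ρ • u t.1, q t.1⟫ : ℝ) : EReal)) := by
    intro q
    rw [sum_inner_netAvg net (fun t => ρ • u t) q fun t t' h => by rw [huconst t t' h],
      Finset.sum_add_distrib, ← Fintype.sum_fiberwise dev fun t => ⟪ρ • u t, q t⟫, netObj]
    congr 1
    exact map_sum (⟨⟨Real.toEReal, EReal.coe_zero⟩, EReal.coe_add⟩ : ℝ →+ EReal) _ _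
  have hmin : ∀ q : 𝒯 → EuclideanSpace ℝ (Fin T),
      netObj dev f p + ((∑ t, ⟪ρ • u t, netAvg net p t⟫ : ℝ) : EReal) ≤
        netObj dev f q + ((∑ t, ⟪ρ • u t, netAvg net q t⟫ : ℝ) : EReal) := by
    intro q
    rw [hlag, hlag]
    exact Finset.sum_le_sum fun d _ => device_le (f d) (hbot d) (hconv d) (hproper d) ρ
      (fun t => p t.1) (fun t => u t.1) (hfix d) fun t => q t.1
  refine ⟨hmin, fun q hq => ?_⟩
  simpa [hbal, hq] using hmin q
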